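/- arXiv:1412.7752 — 2 statements merged into one kernel-verified Lean document; each statement's English description precedes it below -/
import Mathlib

section
/- Let W be a one-sided infinite word over the two-letter alphabet {a, b}. Then the complexity function of W satisfies T_W(n) = n + 1 for all n ≥ 0 if and only if W is balanced and not eventually periodic. -/
/-- The factor of the infinite word `W` of length `n` starting at position `i`. -/
def factorAt {A : Type*} (W : ℕ → A) (i n : ℕ) : List A :=
  (List.range n).map (fun j => W (i + j))

/-- `u` is a factor (subword) of the infinite word `W`. -/
def IsFactor {A : Type*} (W : ℕ → A) (u : List A) : Prop :=
  ∃ i, u = factorAt W i u.length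

/-- The complexity function: the number of distinct factors of `W` of length `n`. -/
noncomputable def complexity {A : Type*} (W : ℕ → A) (n : ℕ) : ℕ :=
  Set.ncard {u : List A | u.length = n ∧ IsFactor W u}

/-- `W` (over the two-letter alphabet `Bool`, where `true` plays the role of
the letter `a`) is balanced: any two factors of equal length have numbers of
occurrences of the letter `a` differing by at most `1`. -/
def BalancedWord (W : ℕ → Bool) : Prop :=
  ∀ u v : List Bool, IsFactor W u → IsFactor W v → u.length = v.length →
    ((u.count true : ℤ) - (v.count true : ℤ)).natAbs ≤ 1

/-- `W` is eventually periodic. -/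
def EventuallyPeriodic {A : Type*} (W : ℕ → A) : Prop :=
  ∃ p : ℕ, 1 ≤ p ∧ ∃ N : ℕ, ∀ n ≥ N, W (n + p) = W n

theorem factorAt_length {A : Type*} (W : ℕ → A) (i n : ℕ) : (factorAt W i n).length = n := by
  simp [factorAt]

theorem factorAt_eq_iff {A : Type*} (W : ℕ → A) (i j n : ℕ) :
    factorAt W i n = factorAt W j n ↔ ∀ k < n, W (i + k) = W (j + k) := by
  simp [factorAt]

theorem factorAt_succ {A : Type*} (W : ℕ → A) (i n : ℕ) :
    factorAt W i (n + 1) = factorAt W i n ++ [W (i + n)] := by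
  simp [factorAt, List.range_succ]

/-- The set of factors of length `n`. -/
def factorSet {A : Type*} (W : ℕ → A) (n : ℕ) : Set (List A) := Set.range (fun i => factorAt W i n)

theorem complexity_eq {A : Type*} (W : ℕ → A) (n : ℕ) :
    complexity W n = (factorSet W n).ncard := by
  unfold complexity factorSet
  congr 1
  ext u
  constructor
  · rintro ⟨rfl, i, hi⟩
    exact ⟨i, hi.symm⟩
  · rintro ⟨i, rfl⟩
    exact ⟨factorAt_length W i n, i, by rw [factorAt_length]⟩

theorem factorSet_finite (W : ℕ → Bool) (n : ℕ) : (factorSet W n).Finite := by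
  refine (List.finite_length_eq Bool n).subset ?_
  rintro _ ⟨i, rfl⟩
  exact factorAt_length W i n

/-- Factors of length `n` that can be extended on the right by `c`. -/
def extSet (W : ℕ → Bool) (n : ℕ) (c : Bool) : Set (List Bool) :=
  {u | ∃ i, u = factorAt W i n ∧ W (i + n) = c}

/-- Right special factors of length `n`. -/
def rightSpecial (W : ℕ → Bool) (n : ℕ) : Set (List Bool) :=
  extSet W n true ∩ extSet W n false

theorem extSet_subset (W : ℕ → Bool) (n : ℕ) (c : Bool) : extSet W n c ⊆ factorSet W n := by
  rintro _ ⟨i, rfl, -⟩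
  exact ⟨i, rfl⟩

theorem factorSet_eq_union (W : ℕ → Bool) (n : ℕ) :
    factorSet W n = extSet W n true ∪ extSet W n false := by
  apply Set.Subset.antisymm
  · rintro _ ⟨i, rfl⟩
    cases h : W (i + n)
    · exact Or.inr ⟨i, rfl, h⟩
    · exact Or.inl ⟨i, rfl, h⟩
  · exact Set.union_subset (extSet_subset W n _) (extSet_subset W n _)

theorem factorSet_succ_eq (W : ℕ → Bool) (n : ℕ) :
    factorSet W (n + 1) = (fun u => u ++ [true]) '' extSet W n true ∪
      (fun u => u ++ [false]) '' extSet W n false := by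
  apply Set.Subset.antisymm
  · rintro _ ⟨i, rfl⟩
    cases h : W (i + n)
    · exact Or.inr ⟨_, ⟨i, rfl, h⟩, by simp [factorAt_succ, h]⟩
    · exact Or.inl ⟨_, ⟨i, rfl, h⟩, by simp [factorAt_succ, h]⟩
  · rintro _ (⟨_, ⟨i, rfl, h⟩, rfl⟩ | ⟨_, ⟨i, rfl, h⟩, rfl⟩)
    · exact ⟨i, by simp [factorAt_succ, h]⟩
    · exact ⟨i, by simp [factorAt_succ, h]⟩

theorem complexity_succ (W : ℕ → Bool) (n : ℕ) :
    complexity W (n + 1) = complexity W n + (rightSpecial W n).ncard := by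
  have ft := (factorSet_finite W n).subset (extSet_subset W n true)
  have ff := (factorSet_finite W n).subset (extSet_subset W n false)
  rw [complexity_eq, complexity_eq, factorSet_succ_eq, factorSet_eq_union W n, rightSpecial,
    Set.ncard_union_add_ncard_inter _ _ ft ff, Set.ncard_union_eq ?_ (ft.image _) (ff.image _),
    Set.ncard_image_of_injective _ (List.append_left_injective _),
    Set.ncard_image_of_injective _ (List.append_left_injective _)]
  rw [Set.disjoint_left]
  rintro _ ⟨u, -, rfl⟩ ⟨v, -, h⟩
  have := List.append_inj' h rfl
  simp at this

theorem complexity_zero (W : ℕ → Bool) : complexity W 0 = 1 := by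
  rw [complexity_eq]
  have : factorSet W 0 = {[]} := by
    ext u
    simp [factorSet, factorAt]
  rw [this, Set.ncard_singleton]

theorem complexity_iff (W : ℕ → Bool) :
    (∀ n, complexity W n = n + 1) ↔ ∀ n, (rightSpecial W n).ncard = 1 := by
  constructor
  · intro h n
    have := complexity_succ W n
    rw [h, h] at this
    omega
  · intro h n
    induction n with
    | zero => exact complexity_zero W
    | succ n ih => rw [complexity_succ, ih, h]

theorem next_eq (W : ℕ → Bool) (n s t : ℕ) (h : factorAt W s n = factorAt W t n)
    (hs : factorAt W s n ∉ rightSpecial W n) :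
    W (s + n) = W (t + n) ∧ factorAt W (s + 1) n = factorAt W (t + 1) n := by
  have h1 : W (s + n) = W (t + n) := by
    by_contra hne
    apply hs
    cases hh : W (s + n) <;> cases ht : W (t + n)
    · simp [hh, ht] at hne
    · exact ⟨⟨t, h, ht⟩, ⟨s, rfl, hh⟩⟩
    · exact ⟨⟨s, rfl, hh⟩, ⟨t, h, ht⟩⟩
    · simp [hh, ht] at hne
  refine ⟨h1, ?_⟩
  rw [factorAt_eq_iff] at h ⊢
  intro k hk
  rcases Nat.lt_or_ge (k + 1) n with h2 | h2
  · have := h (k + 1) h2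
    rwa [add_assoc, add_assoc, add_comm 1 k]
  · have : n = k + 1 := by omega
    subst this
    rwa [add_assoc, add_assoc, add_comm 1 k]

theorem periodic_of_repeat (W : ℕ → Bool) (n p q : ℕ) (hpq : p < q)
    (h : factorAt W p n = factorAt W q n)
    (hns : ∀ t, p ≤ t → t < q → factorAt W t n ∉ rightSpecial W n) : EventuallyPeriodic W := by
  have key : ∀ t, factorAt W (p + t) n = factorAt W (q + t) n ∧
      ∃ s, p ≤ s ∧ s < q ∧ factorAt W (p + t) n = factorAt W s n := by
    intro t
    induction t with
    | zero => exact ⟨h, p, le_rfl, hpq, rfl⟩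
    | succ t ih =>
      obtain ⟨h1, s, hs1, hs2, h2⟩ := ih
      have hn := hns s hs1 hs2
      rw [← h2] at hn
      refine ⟨(next_eq W n _ _ h1 hn).2, ?_⟩
      have h3 := (next_eq W n _ _ h2 hn).2
      rcases Nat.lt_or_ge (s + 1) q with h4 | h4
      · exact ⟨s + 1, by omega, h4, h3⟩
      · have : s + 1 = q := by omega
        rw [this] at h3
        exact ⟨p, le_rfl, hpq, h3.trans h.symm⟩
  refine ⟨q - p, by omega, p + n, ?_⟩
  intro m hm
  obtain ⟨t, rfl⟩ := Nat.exists_eq_add_of_le hm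
  obtain ⟨h1, s, hs1, hs2, h2⟩ := key t
  have hn := hns s hs1 hs2
  rw [← h2] at hn
  have := (next_eq W n _ _ h1 hn).1
  rw [show p + n + t + (q - p) = q + t + n by omega, ← this]
  congr 1
  omega

theorem rightSpecial_nonempty (W : ℕ → Bool) (hW : ¬ EventuallyPeriodic W) (n : ℕ) :
    (rightSpecial W n).Nonempty := by
  by_contra hne
  rw [Set.not_nonempty_iff_eq_empty] at hne
  apply hW
  have hf := factorSet_finite W n
  obtain ⟨x, y, hlt, hxy⟩ : ∃ x y, x < y ∧ factorAt W x n = factorAt W y n := by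
    have := Set.infinite_univ.exists_ne_map_eq_of_mapsTo (f := fun i => factorAt W i n)
      (t := factorSet W n) (fun i _ => ⟨i, rfl⟩) hf
    obtain ⟨x, -, y, -, hne, he⟩ := this
    rcases lt_or_gt_of_ne hne with h | h
    · exact ⟨x, y, h, he⟩
    · exact ⟨y, x, h, he.symm⟩
  exact periodic_of_repeat W n x y hlt hxy (fun t _ _ => by simp [hne])

/-- Number of `true` among the first `n` letters. -/
def prefCount (W : ℕ → Bool) : ℕ → ℤ
  | 0 => 0
  | n + 1 => prefCount W n + (if W n = true then 1 else 0)

theorem count_factorAt (W : ℕ → Bool) (i n : ℕ) :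
    ((factorAt W i n).count true : ℤ) = prefCount W (i + n) - prefCount W i := by
  induction n with
  | zero => simp [factorAt]
  | succ n ih =>
    rw [factorAt_succ, List.count_append]
    push_cast
    rw [ih, ← add_assoc, prefCount]
    cases W (i + n) <;> simp
    ring

theorem balanced_iff (W : ℕ → Bool) : BalancedWord W ↔ ∀ i j n,
    (prefCount W (i + n) - prefCount W i) - (prefCount W (j + n) - prefCount W j) ≤ 1 := by
  constructor
  · intro h i j n
    have := h (factorAt W i n) (factorAt W j n) ⟨i, by rw [factorAt_length]⟩
      ⟨j, by rw [factorAt_length]⟩ (by rw [factorAt_length, factorAt_length])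
    rw [count_factorAt, count_factorAt] at this
    omega
  · rintro h u v ⟨i, hi⟩ ⟨j, hj⟩ hl
    rw [← hl] at hj
    rw [hi, hj, count_factorAt, count_factorAt]
    have h1 := h i j u.length
    have h2 := h j i u.length
    omega

theorem prefCount_agree (W : ℕ → Bool) (i j n : ℕ) (h : ∀ k < n, W (i + k) = W (j + k)) :
    prefCount W (i + n) - prefCount W i = prefCount W (j + n) - prefCount W j := by
  rw [← count_factorAt, ← count_factorAt, (factorAt_eq_iff W i j n).2 h]

/-- `true z true` and `false z false` cannot both be factors of a balanced word. -/
theorem balanced_no_pair (W : ℕ → Bool) (hb : BalancedWord W) (i j m : ℕ)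
    (hi : W i = true) (hj : W j = false) (h : ∀ k < m, W (i + 1 + k) = W (j + 1 + k))
    (hi' : W (i + 1 + m) = true) (hj' : W (j + 1 + m) = false) : False := by
  have h1 := (balanced_iff W).1 hb i j (m + 2)
  have h2 := prefCount_agree W _ _ _ h
  have a1 : prefCount W (i + (m + 2)) = prefCount W (i + 1 + m) + 1 := by
    rw [show i + (m + 2) = i + 1 + m + 1 by omega, prefCount, hi']; simp
  have a2 : prefCount W (j + (m + 2)) = prefCount W (j + 1 + m) := by
    rw [show j + (m + 2) = j + 1 + m + 1 by omega, prefCount, hj']; simp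
  have a3 : prefCount W (i + 1) = prefCount W i + 1 := by simp [prefCount, hi]
  have a4 : prefCount W (j + 1) = prefCount W j := by simp [prefCount, hj]
  omega

theorem exists_last_diff (P : ℕ → Prop) (n : ℕ) (h : ∃ k < n, P k) :
    ∃ k < n, P k ∧ ∀ l, k < l → l < n → ¬ P l := by
  induction n with
  | zero => obtain ⟨k, hk, -⟩ := h; omega
  | succ n ih =>
    by_cases hp : P n
    · exact ⟨n, by omega, hp, fun l h1 h2 => by omega⟩
    · obtain ⟨k, hk, hk'⟩ := h
      have hkn : k ≠ n := by rintro rfl; exact hp hk'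
      obtain ⟨k, h1, h2, h3⟩ := ih ⟨k, by omega, hk'⟩
      refine ⟨k, by omega, h2, fun l h4 h5 => ?_⟩
      rcases Nat.lt_or_ge l n with h6 | h6
      · exact h3 l h4 h6
      · have : l = n := by omega
        rwa [this]

theorem balanced_rightSpecial_unique (W : ℕ → Bool) (hb : BalancedWord W) (n : ℕ)
    (u v : List Bool) (hu : u ∈ rightSpecial W n) (hv : v ∈ rightSpecial W n) : u = v := by
  obtain ⟨⟨i1, e1, t1⟩, ⟨i2, e2, t2⟩⟩ := hu
  obtain ⟨⟨j1, f1, s1⟩, ⟨j2, f2, s2⟩⟩ := hv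
  by_contra hne
  have hi := (factorAt_eq_iff W i1 i2 n).1 (e1.symm.trans e2)
  have hj := (factorAt_eq_iff W j1 j2 n).1 (f1.symm.trans f2)
  have hd : ∃ k < n, W (i1 + k) ≠ W (j1 + k) := by
    by_contra hcon
    push Not at hcon
    exact hne (e1.trans (((factorAt_eq_iff W i1 j1 n).2 hcon).trans f1.symm))
  obtain ⟨k, hk, hk1, hk2⟩ := exists_last_diff _ n hd
  obtain ⟨m, rfl⟩ := Nat.exists_eq_add_of_le hk
  have ag : ∀ l < m, W (i1 + (k + 1 + l)) = W (j1 + (k + 1 + l)) := fun l hl => by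
    have := hk2 (k + 1 + l) (by omega) (by omega)
    exact not_not.1 this
  cases hc : W (i1 + k)
  · have hc' : W (j1 + k) = true := by
      cases h : W (j1 + k)
      · exact absurd (hc.trans h.symm) hk1
      · rfl
    refine balanced_no_pair W hb (j1 + k) (i2 + k) m hc' ?_ ?_ ?_ ?_
    · rw [← hi k hk, hc]
    · intro l hl
      have h1 := ag l hl
      have h2 := hi (k + 1 + l) (by omega)
      simp only [← add_assoc] at *
      rw [← h1, h2]
    · rw [← s1]; congr 1; omega
    · rw [← t2]; congr 1; omega
  · have hc' : W (j1 + k) = false := by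
      cases h : W (j1 + k)
      · rfl
      · exact absurd (hc.trans h.symm) hk1
    refine balanced_no_pair W hb (i1 + k) (j2 + k) m hc ?_ ?_ ?_ ?_
    · rw [← hj k hk, hc']
    · intro l hl
      have h1 := ag l hl
      have h2 := hj (k + 1 + l) (by omega)
      simp only [← add_assoc] at *
      rw [h1, h2]
    · rw [← t1]; congr 1; omega
    · rw [← s2]; congr 1; omega

theorem prefCount_step (W : ℕ → Bool) (n : ℕ) :
    (W n = true ∧ prefCount W (n + 1) = prefCount W n + 1) ∨
    (W n = false ∧ prefCount W (n + 1) = prefCount W n) := by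
  cases h : W n <;> simp [prefCount, h]

/-- An unbalanced word contains `true w true` and `false w false`, `w` a palindrome. -/
theorem unbalanced_palindrome (W : ℕ → Bool) (hb : ¬ BalancedWord W) :
    ∃ i j n, W i = true ∧ W j = false ∧ W (i + 1 + n) = true ∧ W (j + 1 + n) = false ∧
      (∀ k < n, W (i + 1 + k) = W (j + 1 + k)) ∧
      (∀ k < n, W (i + 1 + k) = W (i + 1 + (n - 1 - k))) := by
  classical
  have hex : ∃ n, ∃ i j, 1 <
      (prefCount W (i + n) - prefCount W i) - (prefCount W (j + n) - prefCount W j) := by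
    by_contra hcon
    push Not at hcon
    exact hb ((balanced_iff W).2 fun i j n => hcon n i j)
  obtain ⟨n, hn, hmin⟩ : ∃ n, (∃ i j, 1 <
      (prefCount W (i + n) - prefCount W i) - (prefCount W (j + n) - prefCount W j)) ∧
      ∀ m < n, ∀ i j,
      (prefCount W (i + m) - prefCount W i) - (prefCount W (j + m) - prefCount W j) ≤ 1 := by
    refine ⟨Nat.find hex, Nat.find_spec hex, fun m hm i j => ?_⟩
    have := Nat.find_min hex hm
    push Not at this
    exact this i j
  obtain ⟨i, j, hij⟩ := hn
  have hn2 : 2 ≤ n := by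
    by_contra hlt
    have : n = 0 ∨ n = 1 := by omega
    rcases this with rfl | rfl
    · simp at hij
    · have := prefCount_step W i
      have := prefCount_step W j
      omega
  obtain ⟨n, rfl⟩ : ∃ m, n = m + 2 := ⟨n - 2, by omega⟩
  have hD : ∀ k, 0 < k → k < n + 2 →
      (prefCount W (i + k) - prefCount W i) - (prefCount W (j + k) - prefCount W j) = 1 ∧
      (prefCount W (i + (n + 2)) - prefCount W i) -
        (prefCount W (j + (n + 2)) - prefCount W j) = 2 := by
    intro k h0 hk
    have h1 := hmin k hk i j
    have h2 := hmin (n + 2 - k) (by omega) (i + k) (j + k)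
    rw [show i + k + (n + 2 - k) = i + (n + 2) by omega,
      show j + k + (n + 2 - k) = j + (n + 2) by omega] at h2
    omega
  have hE : ∀ k, 0 < k → k < n + 2 →
      (prefCount W (i + k) - prefCount W i) -
        (prefCount W (j + (n + 2)) - prefCount W (j + (n + 2 - k))) = 1 := by
    intro k h0 hk
    have h1 := hmin k hk i (j + (n + 2 - k))
    have h2 := hmin k hk (i + (n + 2 - k)) j
    rw [show j + (n + 2 - k) + k = j + (n + 2) by omega] at h1
    rw [show i + (n + 2 - k) + k = i + (n + 2) by omega] at h2
    have h3 := hD k h0 hk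
    have h4 := hD (n + 2 - k) (by omega) (by omega)
    omega
  have hmid : ∀ k < n, W (i + 1 + k) = W (j + 1 + k) := by
    intro k hk
    have h1 := hD (1 + k) (by omega) (by omega)
    have h2 := hD (1 + k + 1) (by omega) (by omega)
    have h3 := prefCount_step W (i + 1 + k)
    have h4 := prefCount_step W (j + 1 + k)
    simp only [← add_assoc] at h1 h2
    rcases h3 with ⟨a, b⟩ | ⟨a, b⟩ <;> rcases h4 with ⟨c, d⟩ | ⟨c, d⟩ <;>
      first
      | exact a.trans c.symm
      | (exfalso; omega)
  have hfirst := hD 1 (by omega) (by omega)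
  have hlast := hD (1 + n) (by omega) (by omega)
  have p1 := prefCount_step W i
  have p2 := prefCount_step W j
  have p3 := prefCount_step W (i + 1 + n)
  have p4 := prefCount_step W (j + 1 + n)
  rw [show i + (1 + n) = i + 1 + n by omega, show j + (1 + n) = j + 1 + n by omega,
    show i + (n + 2) = i + 1 + n + 1 by omega, show j + (n + 2) = j + 1 + n + 1 by omega] at hlast
  refine ⟨i, j, n, ?_, ?_, ?_, ?_, hmid, ?_⟩
  · rcases p1 with p1 | p1
    · exact p1.1
    · exfalso; omega
  · rcases p2 with p2 | p2
    · exfalso; omega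
    · exact p2.1
  · rcases p3 with p3 | p3
    · exact p3.1
    · exfalso; omega
  · rcases p4 with p4 | p4
    · exfalso; omega
    · exact p4.1
  · intro k hk
    rw [hmid (n - 1 - k) (by omega)]
    have h1 := hE (1 + k) (by omega) (by omega)
    have h2 := hE (1 + k + 1) (by omega) (by omega)
    have h3 := prefCount_step W (i + 1 + k)
    have h4 := prefCount_step W (j + 1 + (n - 1 - k))
    rw [show i + (1 + k) = i + 1 + k by omega,
      show j + (n + 2 - (1 + k)) = j + 1 + (n - 1 - k) + 1 by omega] at h1
    rw [show i + (1 + k + 1) = i + 1 + k + 1 by omega,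
      show j + (n + 2 - (1 + k + 1)) = j + 1 + (n - 1 - k) by omega] at h2
    rcases h3 with ⟨a, b⟩ | ⟨a, b⟩ <;> rcases h4 with ⟨c, d⟩ | ⟨c, d⟩ <;>
      first
      | exact a.trans c.symm
      | (exfalso; omega)

/-- If `c w c` occurs with `w` a palindrome and the only right special factor of length
`|w| + 1` is `d w` with `d ≠ c`, then the word is eventually periodic. -/
theorem periodic_of_palindrome (W : ℕ → Bool) (hc : ∀ n, complexity W n = n + 1)
    (j n : ℕ) (c : Bool) (h0 : W j = c) (h1 : W (j + 1 + n) = c)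
    (hpal : ∀ k < n, W (j + 1 + k) = W (j + 1 + (n - 1 - k)))
    (hR : ∀ t, factorAt W t (n + 1) ∈ rightSpecial W (n + 1) →
      W t ≠ c ∧ ∀ k < n, W (t + 1 + k) = W (j + 1 + k)) : EventuallyPeriodic W := by
  have hns : ∀ e, e < n + 2 → factorAt W (j + e) (n + 1) ∉ rightSpecial W (n + 1) := by
    intro e he hm
    obtain ⟨h2, h3⟩ := hR _ hm
    apply h2
    rcases Nat.eq_zero_or_pos e with rfl | hpos
    · exact h0
    rcases Nat.lt_or_ge n e with h4 | h4
    · rw [← h1]; congr 1; omega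
    · rcases Nat.eq_zero_or_pos n with rfl | hn
      · omega
      have h5 := h3 (n - e) (by omega)
      rw [show j + e + 1 + (n - e) = j + 1 + n by omega, h1] at h5
      have h6 := hpal (n - e) (by omega)
      rw [← h5, show j + 1 + (n - 1 - (n - e)) = j + e by omega] at h6
      exact h6.symm
  have hcard : (factorSet W (n + 1) \ rightSpecial W (n + 1)).ncard = n + 1 := by
    have hsub : rightSpecial W (n + 1) ⊆ factorSet W (n + 1) :=
      Set.inter_subset_left.trans (extSet_subset W _ _)
    rw [Set.ncard_sdiff hsub ((factorSet_finite W _).subset hsub), (complexity_iff W).1 hc,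
      ← complexity_eq, hc]
    omega
  obtain ⟨x, hx, y, hy, hne, he⟩ := Set.exists_ne_map_eq_of_ncard_lt_of_maps_to
    (s := (Finset.range (n + 2) : Set ℕ)) (t := factorSet W (n + 1) \ rightSpecial W (n + 1))
    (f := fun e => factorAt W (j + e) (n + 1))
    (by rw [hcard, Set.ncard_coe_finset, Finset.card_range]; omega)
    (fun e he => ⟨⟨j + e, rfl⟩, hns e (by simpa using he)⟩)
    ((factorSet_finite W _).subset Set.sdiff_subset)
  have hx' : x < n + 2 := by simpa using hx
  have hy' : y < n + 2 := by simpa using hy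
  have aux : ∀ x y, x < y → y < n + 2 →
      factorAt W (j + x) (n + 1) = factorAt W (j + y) (n + 1) → EventuallyPeriodic W := by
    intro x y hxy hy he
    refine periodic_of_repeat W (n + 1) (j + x) (j + y) (by omega) he (fun t ht1 ht2 => ?_)
    obtain ⟨e, rfl⟩ := Nat.exists_eq_add_of_le (show j ≤ t by omega)
    exact hns e (by omega)
  rcases lt_or_gt_of_ne hne with h | h
  · exact aux x y h hy' he
  · exact aux y x h hx' he.symm

theorem not_periodic_of_complexity (W : ℕ → Bool) (hc : ∀ n, complexity W n = n + 1) :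
    ¬ EventuallyPeriodic W := by
  rintro ⟨p, hp, N, hN⟩
  have hred : ∀ n i, ∃ i' < N + p, factorAt W i n = factorAt W i' n := by
    intro n i
    induction i using Nat.strong_induction_on with
    | _ i ih =>
      rcases Nat.lt_or_ge i (N + p) with h | h
      · exact ⟨i, h, rfl⟩
      · obtain ⟨i', h1, h2⟩ := ih (i - p) (by omega)
        refine ⟨i', h1, Eq.trans ?_ h2⟩
        rw [factorAt_eq_iff]
        intro k _
        rw [← hN (i - p + k) (by omega)]
        congr 1
        omega
  have hsub : factorSet W (N + p) ⊆
      ((Finset.range (N + p)).image (fun i => factorAt W i (N + p)) : Finset (List Bool)) := by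
    rintro _ ⟨i, rfl⟩
    obtain ⟨i', h1, h2⟩ := hred (N + p) i
    simp only [Finset.coe_image, Set.mem_image]
    exact ⟨i', by simpa using h1, h2.symm⟩
  have h1 := Set.ncard_le_ncard hsub (Finset.finite_toSet _)
  rw [Set.ncard_coe_finset, ← complexity_eq, hc] at h1
  have h2 := Finset.card_image_le (s := Finset.range (N + p)) (f := fun i => factorAt W i (N + p))
  rw [Finset.card_range] at h2
  omega

theorem balanced_of_complexity (W : ℕ → Bool) (hc : ∀ n, complexity W n = n + 1) :
    BalancedWord W := by
  by_contra hb
  apply not_periodic_of_complexity W hc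
  obtain ⟨i, j, n, i0, j0, i1, j1, hmid, hpal⟩ := unbalanced_palindrome W hb
  have hR := (complexity_iff W).1 hc
  have hw : factorAt W (i + 1) n ∈ rightSpecial W n :=
    ⟨⟨i + 1, rfl, i1⟩, ⟨j + 1, (factorAt_eq_iff W _ _ n).2 hmid, j1⟩⟩
  obtain ⟨w, hw'⟩ := Set.ncard_eq_one.1 (hR n)
  obtain ⟨z, hz⟩ := Set.ncard_eq_one.1 (hR (n + 1))
  have htail : ∀ t, factorAt W t (n + 1) ∈ rightSpecial W (n + 1) →
      ∀ k < n, W (t + 1 + k) = W (i + 1 + k) := by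
    rintro t ⟨⟨a, ea, ha⟩, ⟨b, eb, hb⟩⟩
    have sh : ∀ a, factorAt W t (n + 1) = factorAt W a (n + 1) →
        factorAt W (t + 1) n = factorAt W (a + 1) n := by
      intro a ea
      rw [factorAt_eq_iff] at ea ⊢
      intro k hk
      have := ea (1 + k) (by omega)
      simpa only [← add_assoc] using this
    have hm : factorAt W (t + 1) n ∈ rightSpecial W n :=
      ⟨⟨a + 1, sh a ea, by rw [← ha]; congr 1; omega⟩,
        ⟨b + 1, sh b eb, by rw [← hb]; congr 1; omega⟩⟩
    rw [hw'] at hm hw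
    exact (factorAt_eq_iff W _ _ n).1 (hm.trans hw.symm)
  have hzt : z ∈ rightSpecial W (n + 1) := by rw [hz]; rfl
  have hhead : ∀ t s, factorAt W t (n + 1) ∈ rightSpecial W (n + 1) →
      factorAt W s (n + 1) ∈ rightSpecial W (n + 1) → W t = W s := by
    intro t s ht hs
    rw [hz] at ht hs
    exact (factorAt_eq_iff W t s (n + 1)).1 (ht.trans hs.symm) 0 (by omega)
  obtain ⟨⟨s, es, -⟩, -⟩ := id hzt
  rw [es] at hzt
  cases hs : W s
  · refine periodic_of_palindrome W hc i n true i0 i1 hpal (fun t ht => ⟨?_, htail t ht⟩)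
    rw [hhead t s ht hzt, hs]; simp
  · refine periodic_of_palindrome W hc j n false j0 j1 ?_ (fun t ht => ⟨?_, ?_⟩)
    · intro k hk
      rw [← hmid k hk, ← hmid _ (by omega), hpal k hk]
    · rw [hhead t s ht hzt, hs]; simp
    · intro k hk
      rw [← hmid k hk, htail t ht k hk]

/-- A one-sided infinite word over a two-letter alphabet has complexity
`T_W(n) = n + 1` for all `n ≥ 0` if and only if it is balanced and not
eventually periodic. -/
theorem sturmian_iff_balanced_aperiodic (W : ℕ → Bool) :
    (∀ n : ℕ, complexity W n = n + 1) ↔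
      (BalancedWord W ∧ ¬ EventuallyPeriodic W) := by
  constructor
  · intro h
    exact ⟨balanced_of_complexity W h, not_periodic_of_complexity W h⟩
  · rintro ⟨hb, hp⟩
    rw [complexity_iff]
    intro n
    obtain ⟨u, hu⟩ := rightSpecial_nonempty W hp n
    rw [Set.ncard_eq_one]
    refine ⟨u, Set.eq_singleton_iff_unique_mem.2 ⟨hu, fun v hv => ?_⟩⟩
    exact balanced_rightSpecial_unique W hb n v u hv hu
end

section
/- Let α be an irrational real number, let x₀ be a point of the circle ℝ/ℤ, and let U be a half-open arc of length α in ℝ/ℤ. Define the infinite word W over {a, b} by W(n) = a if x₀ + nα (mod 1) lies in U and W(n) = b otherwise. Then the complexity function of W satisfies T_W(n) = n + 1 for all n ≥ 0. -/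
/-- `U` is a half-open arc of length `len` in the circle `ℝ/ℤ`. -/
def IsHalfOpenArc (U : Set (AddCircle (1 : ℝ))) (len : ℝ) : Prop :=
  0 < len ∧ len < 1 ∧
    ∃ c : ℝ, U = (fun x : ℝ => (x : AddCircle (1 : ℝ))) '' Set.Ico c (c + len)

theorem aux_interval (T : Finset ℝ) : ∀ (B : ℝ), 0 < B → (∀ x ∈ T, 0 < x ∧ x < B) →
    ∀ k ≤ T.card, ∃ a b : ℝ, 0 ≤ a ∧ a < b ∧ b ≤ B ∧
      ∀ x, a < x → x < b → (T.filter (· ≤ x)).card = k := by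
  induction T using Finset.induction_on_max with
  | empty =>
    intro B hB _ k hk
    refine ⟨0, B, le_rfl, hB, le_rfl, ?_⟩
    intro x _ _
    simp at hk ⊢
    exact hk.symm
  | insert m s hm ih =>
    intro B hB hT k hk
    have hmB := hT m (Finset.mem_insert_self _ _)
    have hms : m ∉ s := fun h => lt_irrefl _ (hm m h)
    rw [Finset.card_insert_of_notMem hms] at hk
    rcases Nat.lt_or_ge s.card k with h | h
    · refine ⟨m, B, hmB.1.le, hmB.2, le_rfl, ?_⟩
      intro x hx _
      rw [Finset.filter_true_of_mem, Finset.card_insert_of_notMem hms]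
      · omega
      · intro y hy
        rcases Finset.mem_insert.1 hy with rfl | hy
        · exact hx.le
        · exact ((hm y hy).trans hx).le
    · obtain ⟨a, b, h0, hab, hb, H⟩ := ih m hmB.1
        (fun x hx => ⟨(hT x (Finset.mem_insert_of_mem hx)).1, hm x hx⟩) k h
      refine ⟨a, b, h0, hab, hb.trans hmB.2.le, ?_⟩
      intro x hx hxb
      rw [Finset.filter_insert, if_neg (by linarith)]
      exact H x hx hxb

theorem aux_dense (α : ℝ) (hα : Irrational α) (z a b : ℝ) (ha : 0 ≤ a) (hab : a < b)
    (hb : b ≤ 1) : ∃ i : ℕ, a < Int.fract (z + i * α) ∧ Int.fract (z + i * α) < b := by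
  haveI : Fact ((0 : ℝ) < 1) := ⟨one_pos⟩
  have hd : DenseRange (fun n : ℕ => n • (α : AddCircle (1 : ℝ))) := by
    rw [← denseRange_zsmul_iff_nsmul]
    rw [AddCircle.denseRange_zsmul_coe_iff]
    simpa using hα
  have ho : IsOpen ((fun x : ℝ => (x : AddCircle (1 : ℝ))) '' Set.Ioo (a - z) (b - z)) :=
    QuotientAddGroup.isOpenMap_coe _ isOpen_Ioo
  obtain ⟨i, x, hx, hxi⟩ := hd.exists_mem_open ho ⟨_, (a + b) / 2 - z, ⟨by linarith, by linarith⟩, rfl⟩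
  refine ⟨i, ?_⟩
  have h1 : ((x - i * α : ℝ) : AddCircle (1 : ℝ)) = 0 := by
    rw [AddCircle.coe_sub, sub_eq_zero, ← nsmul_eq_mul, AddCircle.coe_nsmul]
    exact hxi
  obtain ⟨m, hm⟩ := (AddCircle.coe_eq_zero_iff (1 : ℝ)).1 h1
  have hm' : x - i * α = m := by rw [← hm]; simp
  have h2 : Int.fract (z + i * α) = z + x := by
    rw [Int.fract_eq_iff]
    refine ⟨by linarith [hx.1], by linarith [hx.2], -m, ?_⟩
    push_cast; linarith
  rw [h2]
  exact ⟨by linarith [hx.1], by linarith [hx.2]⟩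

theorem aux_floor (t u : ℝ) : ⌊t + u⌋ - ⌊t⌋ = ⌊u⌋ + if 1 - Int.fract u ≤ Int.fract t then 1 else 0 := by
  have h1 := Int.fract_add_floor t
  have h2 := Int.fract_add_floor u
  have a1 := Int.fract_nonneg t
  have a2 := Int.fract_nonneg u
  have b1 := Int.fract_lt_one t
  have b2 := Int.fract_lt_one u
  rw [sub_eq_iff_eq_add, Int.floor_eq_iff]
  split_ifs <;> push_cast <;> constructor <;> linarith

theorem aux_ncard {ι β γ : Type*} (f : ι → β) (g : ι → γ) (h : ∀ i j, f i = f j ↔ g i = g j) :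
    (Set.range f).ncard = (Set.range g).ncard := by
  refine Set.ncard_congr (fun b hb => g hb.choose) (fun b hb => ⟨_, rfl⟩) ?_ ?_
  · intro b c hb hc hbc
    have := (h _ _).2 hbc
    rw [hb.choose_spec, hc.choose_spec] at this
    exact this
  · rintro _ ⟨i, rfl⟩
    refine ⟨f i, ⟨i, rfl⟩, ?_⟩
    exact (h _ _).1 (Exists.choose_spec (⟨i, rfl⟩ : ∃ j, f j = f i))

theorem aux_mem (α c x : ℝ) (h0 : 0 < α) (h1 : α < 1) :
    ((x : ℝ) : AddCircle (1 : ℝ)) ∈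
      (fun x : ℝ => (x : AddCircle (1 : ℝ))) '' Set.Ico c (c + α) ↔
    ⌊x - c⌋ = ⌊x - c - α⌋ + 1 := by
  constructor
  · rintro ⟨w, hw, hwx⟩
    have h2 : ((x - w : ℝ) : AddCircle (1 : ℝ)) = 0 := by
      rw [AddCircle.coe_sub, sub_eq_zero]
      exact hwx.symm
    obtain ⟨m, hm⟩ := (AddCircle.coe_eq_zero_iff (1 : ℝ)).1 h2
    have hm' : x - w = m := by rw [← hm]; simp
    have e1 : ⌊x - c⌋ = m := by
      rw [Int.floor_eq_iff]; constructor <;> linarith [hw.1, hw.2]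
    have e2 : ⌊x - c - α⌋ = m - 1 := by
      rw [Int.floor_eq_iff]; push_cast; constructor <;> linarith [hw.1, hw.2]
    omega
  · intro h
    refine ⟨x - ⌊x - c⌋, ⟨?_, ?_⟩, ?_⟩
    · linarith [Int.floor_le (x - c)]
    · have := Int.lt_floor_add_one (x - c - α)
      rw [h]; push_cast; linarith
    · have : ((⌊x - c⌋ : ℝ) : AddCircle (1 : ℝ)) = 0 :=
        (AddCircle.coe_eq_zero_iff (1 : ℝ)).2 ⟨⌊x - c⌋, by simp⟩
      simp only [AddCircle.coe_sub, this, sub_zero]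

theorem mechanical_word_complexity (α : ℝ) (hα : Irrational α) (x₀ : ℝ)
    (U : Set (AddCircle (1 : ℝ))) (hU : IsHalfOpenArc U α) (W : ℕ → Bool)
    (hW : ∀ n : ℕ, W n = true ↔ ((x₀ + n * α : ℝ) : AddCircle (1 : ℝ)) ∈ U) :
    ∀ n : ℕ, complexity W n = n + 1 := by
  intro n
  obtain ⟨h0, h1, c, rfl⟩ := hU
  obtain ⟨z, hz⟩ : ∃ z, z = x₀ - c - α := ⟨_, rfl⟩
  have hW1 : ∀ n : ℕ, W n = true ↔ ⌊z + (n + 1 : ℕ) * α⌋ = ⌊z + n * α⌋ + 1 := by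
    intro n
    rw [hW, aux_mem α c _ h0 h1, hz]
    have e1 : x₀ + n * α - c = x₀ - c - α + (n + 1 : ℕ) * α := by push_cast; ring
    have e2 : x₀ + n * α - c - α = x₀ - c - α + n * α := by ring
    rw [e2, e1]
  have hW2 : ∀ n : ℕ, ⌊z + (n + 1 : ℕ) * α⌋ = ⌊z + n * α⌋ + if W n = true then 1 else 0 := by
    intro n
    split_ifs with h
    · exact (hW1 n).1 h
    · rw [hW1] at h
      have g1 : ⌊z + n * α⌋ ≤ ⌊z + (n + 1 : ℕ) * α⌋ := by
        apply Int.floor_mono; push_cast; linarith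
      have g2 : ⌊z + (n + 1 : ℕ) * α⌋ ≤ ⌊z + n * α⌋ + 1 := by
        rw [← Int.floor_add_one]; apply Int.floor_mono; push_cast; linarith
      omega
  -- thresholds
  set θ : ℕ → ℝ := fun j => 1 - Int.fract (j * α) with hθ
  set t : ℕ → ℝ := fun i => Int.fract (z + i * α) with ht
  have hF : ∀ i j : ℕ, ⌊z + (i + j : ℕ) * α⌋ - ⌊z + i * α⌋ =
      ⌊j * α⌋ + if θ j ≤ t i then 1 else 0 := by
    intro i j
    rw [hθ, ht, ← aux_floor]
    congr 2
    push_cast; ring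
  have hirr : ∀ (j : ℕ) (m : ℤ), 0 < j → (j : ℝ) * α ≠ m := by
    intro j m hj h
    exact (hα.natCast_mul hj.ne').ne_int m h
  have hinj : Function.Injective θ := by
    have key : ∀ i j : ℕ, i < j → θ i ≠ θ j := by
      intro i j hij h
      have h' : Int.fract (i * α) = Int.fract (j * α) := by simp only [hθ] at h; linarith
      obtain ⟨m, hm⟩ := Int.fract_eq_fract.1 h'.symm
      apply hirr (j - i) m (by omega)
      rw [Nat.cast_sub hij.le, ← hm]; ring
    intro i j h
    rcases lt_trichotomy i j with hl | hl | hl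
    · exact absurd h (key _ _ hl)
    · exact hl
    · exact absurd h.symm (key _ _ hl)
  set N : ℕ → ℕ := fun i => ((Finset.Icc 1 n).filter (fun j => θ j ≤ t i)).card with hN
  have hset : {u : List Bool | u.length = n ∧ IsFactor W u} =
      Set.range (fun i => factorAt W i n) := by
    ext u
    constructor
    · rintro ⟨rfl, i, hi⟩
      exact ⟨i, hi.symm⟩
    · rintro ⟨i, rfl⟩
      have : (factorAt W i n).length = n := by simp [factorAt]
      exact ⟨this, i, by rw [this]⟩
  have hfac : ∀ i i' : ℕ, factorAt W i n = factorAt W i' n ↔ ∀ j < n, W (i + j) = W (i' + j) := by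
    intro i i'
    simp [factorAt]
  have hiff : ∀ i i' : ℕ, factorAt W i n = factorAt W i' n ↔ N i = N i' := by
    intro i i'
    have e1 : factorAt W i n = factorAt W i' n ↔
        ∀ j ∈ Finset.Icc 1 n, (θ j ≤ t i ↔ θ j ≤ t i') := by
      rw [hfac]
      constructor
      · intro h
        have hFF : ∀ j ≤ n, ⌊z + (i + j : ℕ) * α⌋ - ⌊z + i * α⌋ =
            ⌊z + (i' + j : ℕ) * α⌋ - ⌊z + i' * α⌋ := by
          intro j
          induction j with
          | zero => simp
          | succ j ih =>
            intro hj
            have a1 := hW2 (i + j)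
            have a2 := hW2 (i' + j)
            rw [h j (by omega)] at a1
            have a3 := ih (by omega)
            rw [← add_assoc, ← add_assoc, a1, a2]
            linarith
        intro j hj
        have := hFF j (Finset.mem_Icc.1 hj).2
        rw [hF, hF] at this
        split_ifs at this <;> first | omega | tauto
      · intro h
        have hFF : ∀ j ≤ n, ⌊z + (i + j : ℕ) * α⌋ - ⌊z + i * α⌋ =
            ⌊z + (i' + j : ℕ) * α⌋ - ⌊z + i' * α⌋ := by
          intro j hj
          rcases Nat.eq_zero_or_pos j with rfl | hp
          · simp
          · rw [hF, hF]
            simp only [h j (Finset.mem_Icc.2 ⟨hp, hj⟩)]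
        intro j hj
        have a1 := hW2 (i + j)
        have a2 := hW2 (i' + j)
        have a3 := hFF j hj.le
        have a4 := hFF (j + 1) hj
        rw [← add_assoc, ← add_assoc, a1, a2] at a4
        rw [Bool.eq_iff_iff]
        split_ifs at a4 <;> first | omega | tauto
    rw [e1]
    constructor
    · intro h
      simp only [hN]
      rw [Finset.filter_congr h]
    · intro h
      have key : ∀ i i' : ℕ, t i ≤ t i' → N i = N i' →
          ∀ j ∈ Finset.Icc 1 n, (θ j ≤ t i ↔ θ j ≤ t i') := by
        intro i i' hle hc
        have hs : (Finset.Icc 1 n).filter (fun j => θ j ≤ t i) ⊆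
            (Finset.Icc 1 n).filter (fun j => θ j ≤ t i') :=
          Finset.monotone_filter_right _ (fun j _ hj => le_trans hj hle)
        exact Finset.filter_inj'.1 (Finset.eq_of_subset_of_card_le hs hc.ge) 
      rcases le_total (t i) (t i') with hle | hle
      · exact key i i' hle h
      · intro j hj
        exact (key i' i hle h.symm j hj).symm
  have hrange : Set.range N = Set.Iic n := by
    ext k
    constructor
    · rintro ⟨i, rfl⟩
      have := Finset.card_filter_le (Finset.Icc 1 n) (fun j => θ j ≤ t i)
      simpa [hN] using this
    · intro hk
      obtain ⟨a, b, ha, hab, hb, H⟩ := aux_interval ((Finset.Icc 1 n).image θ) 1 one_pos (by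
        intro x hx
        obtain ⟨j, hj, rfl⟩ := Finset.mem_image.1 hx
        have hj1 := (Finset.mem_Icc.1 hj).1
        have g1 := Int.fract_lt_one ((j : ℝ) * α)
        have g2 := Int.fract_nonneg ((j : ℝ) * α)
        have g3 : Int.fract ((j : ℝ) * α) ≠ 0 := by
          intro h
          obtain ⟨m, hm⟩ := Int.fract_eq_zero_iff.1 h
          exact hirr j m hj1 hm.symm
        have g4 := lt_of_le_of_ne g2 g3.symm
        simp only [hθ]
        constructor <;> linarith) k (by
        rw [Finset.card_image_of_injective _ hinj]; simpa using hk)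
      obtain ⟨i, hi1, hi2⟩ := aux_dense α hα z a b ha hab hb
      refine ⟨i, ?_⟩
      have := H (t i) hi1 hi2
      rw [Finset.filter_image, Finset.card_image_of_injective _ hinj] at this
      exact this
  unfold complexity
  rw [hset, aux_ncard _ N hiff, hrange]
  rw [← Finset.coe_Iic, Set.ncard_coe_finset]
  simp
end
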